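/- arXiv:1409.3159 — 2 statements merged into one kernel-verified Lean document; each statement's English description precedes it below -/
import Mathlib

section
/- Let G be a connected graph of order n with σ_2 ≥ n − 2k + 2 for some positive integer k. Then G has a dominating k-ended tree. (Corollary 9) -/
open SimpleGraph

variable {V : Type*}

/-- A set of vertices is independent in `G`. -/
def IsIndSet (G : SimpleGraph V) (s : Set V) : Prop :=
  ∀ ⦃u⦄, u ∈ s → ∀ ⦃v⦄, v ∈ s → ¬ G.Adj u v

/-- The number of end-vertices (vertices of degree one) of a subgraph `H`. -/
noncomputable def endVertexCount {G : SimpleGraph V} (H : G.Subgraph) : ℕ :=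
  {v : V | v ∈ H.verts ∧ (H.neighborSet v).ncard = 1}.ncard

/-- `H` is a cycle; a single vertex and a single edge are regarded as
simple cycles of orders 1 and 2, respectively. -/
def IsCycleSubgraph {G : SimpleGraph V} (H : G.Subgraph) : Prop :=
  H.Connected ∧ (H.verts.ncard ≤ 2 ∨ ∀ v ∈ H.verts, (H.neighborSet v).ncard = 2)

/-- `H` is a `k`-ended tree in `G`: a tree with at most `k` end-vertices (leaves);
a cycle is regarded as a 1-ended tree. -/
def IsKEndedTree (G : SimpleGraph V) (k : ℕ) (H : G.Subgraph) : Prop :=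
  (H.coe.IsTree ∧ endVertexCount H ≤ k) ∨ (1 ≤ k ∧ IsCycleSubgraph H)

/-- `t k`: the order of a largest `k`-ended tree in `G`. -/
noncomputable def maxKEndedOrder (G : SimpleGraph V) (k : ℕ) : ℕ :=
  sSup {n | ∃ H : G.Subgraph, IsKEndedTree G k H ∧ H.verts.ncard = n}

/-- `σ m`: the minimum degree sum over independent sets of `m` vertices of `G`,
and `+∞` if the independence number of `G` is less than `m`. -/
noncomputable def minDegreeSum (G : SimpleGraph V) [Fintype V] [DecidableRel G.Adj]
    (m : ℕ) : ℕ∞ :=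
  ⨅ s ∈ {s : Finset V | s.card = m ∧ IsIndSet G ↑s}, (∑ v ∈ s, G.degree v : ℕ∞)

/-- In a connected graph, every nonempty proper vertex set sends an edge to its complement. -/
theorem SimpleGraph.Connected.exists_adj_mem_notMem {G : SimpleGraph V} (hG : G.Connected)
    {S : Set V} {a b : V} (ha : a ∈ S) (hb : b ∉ S) : ∃ c w, c ∈ S ∧ w ∉ S ∧ G.Adj c w := by
  obtain ⟨p⟩ := hG.preconnected a b
  obtain ⟨d, -, hd⟩ := p.exists_boundary_dart S ha hb
  exact ⟨d.fst, d.snd, hd.1, hd.2, d.adj⟩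

/-- If a nonempty vertex set is not dominating in a connected graph, then some path on two
outside vertices is attached to it. -/
theorem SimpleGraph.Connected.exists_pendant_edge {G : SimpleGraph V} (hG : G.Connected)
    {S : Set V} (hS : S.Nonempty) (hdom : ¬ IsIndSet G Sᶜ) :
    ∃ v w x, v ∈ S ∧ w ∉ S ∧ x ∉ S ∧ G.Adj v w ∧ G.Adj w x := by
  simp only [IsIndSet, not_forall, not_not] at hdom
  obtain ⟨a, ha, b, hb, hab⟩ := hdom
  obtain ⟨s, hs⟩ := hS
  by_contra! hcon
  -- `C` collects the outside vertices having an outside neighbour; no edge leaves it.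
  let C : Set V := {w | w ∉ S ∧ ∃ x, x ∉ S ∧ G.Adj w x}
  obtain ⟨c, w, ⟨hcS, x, hxS, hcx⟩, hw, hcw⟩ :=
    hG.exists_adj_mem_notMem (S := C) (a := a) (b := s) ⟨ha, b, hb, hab⟩ (fun h => h.1 hs)
  by_cases hwS : w ∈ S
  · exact hcon w c x hwS hcS hxS hcw.symm hcx
  · exact hw ⟨hwS, c, hcS, hcw.symm⟩

/-- The vertices of degree at most one of a subgraph. -/
def lowDegreeSet {G : SimpleGraph V} (H : G.Subgraph) : Set V :=
  {v | v ∈ H.verts ∧ (H.neighborSet v).ncard ≤ 1}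

theorem endVertexCount_le_ncard_lowDegreeSet [Finite V] {G : SimpleGraph V} (H : G.Subgraph) :
    endVertexCount H ≤ (lowDegreeSet H).ncard :=
  Set.ncard_le_ncard (fun _ hv => ⟨hv.1, hv.2.le⟩) (Set.toFinite _)

theorem isTree_coe_of_isAcyclic_spanningCoe {G : SimpleGraph V} {H : G.Subgraph}
    (hc : H.Connected) (ha : H.spanningCoe.IsAcyclic) : H.coe.IsTree :=
  ⟨Subgraph.connected_iff'.1 hc, ha.embedding H.coeEmbeddingSpanningCoe⟩

theorem connected_sup_subgraphOfAdj {G : SimpleGraph V} {H : G.Subgraph} {v w : V}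
    (hc : H.Connected) (hv : v ∈ H.verts) (h : G.Adj v w) :
    (H ⊔ G.subgraphOfAdj h).Connected :=
  Subgraph.connected_sup hc.preconnected (Subgraph.subgraphOfAdj_connected h).preconnected
    ⟨v, hv, by simp⟩

/-- Attaching a pendant vertex to a subgraph preserves acyclicity. -/
theorem isAcyclic_spanningCoe_sup_subgraphOfAdj {G : SimpleGraph V} {H : G.Subgraph} {v w : V}
    (ha : H.spanningCoe.IsAcyclic) (hw : w ∉ H.verts) (h : G.Adj v w) :
    (H ⊔ G.subgraphOfAdj h).spanningCoe.IsAcyclic := by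
  rw [Subgraph.sup_spanningCoe, Subgraph.spanningCoe_subgraphOfAdj]
  refine ha.sup_edge_of_not_reachable ?_
  intro hr
  obtain ⟨p⟩ := hr.symm
  cases p with
  | nil => exact h.ne rfl
  | cons hadj _ => exact hw (H.edge_vert hadj)

/-- Attaching a path on two new vertices to an acyclic connected subgraph creates at most one new
vertex of degree at most one. -/
theorem exists_subgraph_attach_two [Finite V] {G : SimpleGraph V} {H : G.Subgraph} {v w x : V}
    (hc : H.Connected) (ha : H.spanningCoe.IsAcyclic) (hv : v ∈ H.verts) (hw : w ∉ H.verts)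
    (hx : x ∉ H.verts) (hvw : G.Adj v w) (hwx : G.Adj w x) :
    ∃ K : G.Subgraph, K.Connected ∧ K.spanningCoe.IsAcyclic ∧
      K.verts.ncard = H.verts.ncard + 2 ∧
      (lowDegreeSet K).ncard ≤ (lowDegreeSet H).ncard + 1 := by
  have hvx : x ≠ v := fun e => hx (e ▸ hv)
  have hverts : (H ⊔ G.subgraphOfAdj hvw ⊔ G.subgraphOfAdj hwx).verts =
      insert x (insert w H.verts) := by
    ext y
    simp only [Subgraph.verts_sup, subgraphOfAdj_verts, Set.mem_union, Set.mem_insert_iff,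
      Set.mem_singleton_iff]
    constructor
    · rintro ((h | rfl | rfl) | rfl | rfl) <;> tauto
    · tauto
  refine ⟨H ⊔ G.subgraphOfAdj hvw ⊔ G.subgraphOfAdj hwx,
    connected_sup_subgraphOfAdj (connected_sup_subgraphOfAdj hc hv hvw) (by simp) hwx,
    isAcyclic_spanningCoe_sup_subgraphOfAdj
      (isAcyclic_spanningCoe_sup_subgraphOfAdj ha hw hvw) ?_ hwx, ?_, ?_⟩
  · simp [hx, hvx, hwx.ne']
  · rw [hverts, Set.ncard_insert_of_notMem (by simp [hx, hwx.ne']), Set.ncard_insert_of_notMem hw]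
  · refine (Set.ncard_le_ncard (t := insert x (lowDegreeSet H)) ?_ (Set.toFinite _)).trans
      (Set.ncard_insert_le _ _)
    rintro y ⟨hy, hdeg⟩
    rw [hverts] at hy
    rcases hy with rfl | rfl | hy
    · exact Set.mem_insert _ _
    · exfalso
      have hsub : ({v, x} : Set V) ⊆
          (H ⊔ G.subgraphOfAdj hvw ⊔ G.subgraphOfAdj hwx).neighborSet y := by
        rintro z (rfl | rfl) <;> simp
      have := Set.ncard_le_ncard hsub (Set.toFinite _)
      rw [Set.ncard_pair hvx.symm] at this
      omega
    · refine Or.inr ⟨hy, le_trans (Set.ncard_le_ncard ?_ (Set.toFinite _)) hdeg⟩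
      intro z hz
      exact Or.inl (Or.inl hz)

/-- A tree missing at most `2 * m + 1` vertices of a connected graph extends to a dominating tree
with at most `m` additional vertices of degree at most one. -/
theorem exists_dominating_tree_of_card_le [Fintype V] {G : SimpleGraph V} (hG : G.Connected)
    (m : ℕ) : ∀ H : G.Subgraph, H.Connected → H.spanningCoe.IsAcyclic →
      Fintype.card V ≤ H.verts.ncard + (2 * m + 1) →
      ∃ K : G.Subgraph, K.coe.IsTree ∧
        endVertexCount K ≤ (lowDegreeSet H).ncard + m ∧ IsIndSet G K.vertsᶜ := by
  induction m with
  | zero =>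
    intro H hc ha hcard
    refine ⟨H, isTree_coe_of_isAcyclic_spanningCoe hc ha,
      endVertexCount_le_ncard_lowDegreeSet H, ?_⟩
    have hcompl : H.vertsᶜ.ncard ≤ 1 := by
      have := Set.ncard_add_ncard_compl H.verts
      rw [Nat.card_eq_fintype_card] at this
      omega
    intro a ha b hb hab
    exact hab.ne ((Set.ncard_le_one (Set.toFinite _)).1 hcompl a ha b hb)
  | succ m ih =>
    intro H hc ha hcard
    by_cases hdom : IsIndSet G H.vertsᶜ
    · exact ⟨H, isTree_coe_of_isAcyclic_spanningCoe hc ha,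
        (endVertexCount_le_ncard_lowDegreeSet H).trans (Nat.le_add_right _ _), hdom⟩
    · obtain ⟨v, w, x, hv, hw, hx, hvw, hwx⟩ := hG.exists_pendant_edge hc.nonempty hdom
      obtain ⟨K, hKc, hKa, hKn, hKl⟩ := exists_subgraph_attach_two hc ha hv hw hx hvw hwx
      obtain ⟨T, hT, hTl, hTd⟩ := ih K hKc hKa (by omega)
      exact ⟨T, hT, by omega, hTd⟩

theorem SimpleGraph.Walk.IsPath.isAcyclic_spanningCoe_toSubgraph {G : SimpleGraph V} {u v : V}
    {p : G.Walk u v} (hp : p.IsPath) : p.toSubgraph.spanningCoe.IsAcyclic := by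
  induction p with
  | nil =>
    refine isAcyclic_bot.anti ?_
    intro a b hab
    simp at hab
  | cons h q ih =>
    rw [Walk.cons_isPath_iff] at hp
    have := isAcyclic_spanningCoe_sup_subgraphOfAdj (ih hp.1) (by simpa using hp.2) h.symm
    rwa [subgraphOfAdj_symm, sup_comm] at this

theorem SimpleGraph.Walk.IsPath.ncard_lowDegreeSet_toSubgraph_le [Finite V] {G : SimpleGraph V}
    {u v : V} {p : G.Walk u v} (hp : p.IsPath) : (lowDegreeSet p.toSubgraph).ncard ≤ 2 := by
  refine (Set.ncard_le_ncard (t := {u, v}) ?_ (Set.toFinite _)).trans (by simpa using Set.ncard_insert_le u {v})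
  rintro y ⟨hy, hdeg⟩
  obtain ⟨i, rfl, hi⟩ := Walk.mem_support_iff_exists_getVert.1 ((p.mem_verts_toSubgraph).1 hy)
  rcases Nat.eq_zero_or_pos i with rfl | hpos
  · simp
  · rcases hi.eq_or_lt with rfl | hlt
    · simp
    · rw [hp.ncard_neighborSet_toSubgraph_internal_eq_two hpos.ne' hlt] at hdeg
      omega

theorem SimpleGraph.Walk.IsPath.ncard_verts_toSubgraph {G : SimpleGraph V}
    {u v : V} {p : G.Walk u v} (hp : p.IsPath) : p.toSubgraph.verts.ncard = p.length + 1 := by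
  classical
  rw [Walk.verts_toSubgraph, ← p.length_support, ← List.toFinset_card_of_nodup hp.support_nodup,
    ← Set.ncard_coe_finset]
  congr 1
  ext
  simp

/-- A path which is at least as long as any other path of the graph. -/
def IsLongestPath {G : SimpleGraph V} {u v : V} (p : G.Walk u v) : Prop :=
  p.IsPath ∧ ∀ (a b : V) (q : G.Walk a b), q.IsPath → q.length ≤ p.length

theorem IsLongestPath.reverse {G : SimpleGraph V} {u v : V} {p : G.Walk u v}
    (hp : IsLongestPath p) : IsLongestPath p.reverse :=
  ⟨hp.1.reverse, by simpa using hp.2⟩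

theorem IsLongestPath.mem_support_of_adj_start {G : SimpleGraph V} {u v w : V} {p : G.Walk u v}
    (hp : IsLongestPath p) (h : G.Adj u w) : w ∈ p.support := by
  by_contra hw
  have := hp.2 _ _ (Walk.cons h.symm p) ((Walk.cons_isPath_iff _ _).2 ⟨hp.1, hw⟩)
  simp at this

theorem IsLongestPath.mem_support_of_adj_end {G : SimpleGraph V} {u v w : V} {p : G.Walk u v}
    (hp : IsLongestPath p) (h : G.Adj v w) : w ∈ p.support := by
  simpa using hp.reverse.mem_support_of_adj_start h

theorem IsLongestPath.mem_support_of_length_le_one {G : SimpleGraph V} (hG : G.Connected)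
    {u v : V} {p : G.Walk u v} (hp : IsLongestPath p) (hlen : p.length ≤ 1) (w : V) :
    w ∈ p.support := by
  by_contra hw
  obtain ⟨c, x, hc, hx, hcx⟩ :=
    hG.exists_adj_mem_notMem (S := {y | y ∈ p.support}) p.start_mem_support hw
  obtain ⟨i, rfl, hi⟩ := Walk.mem_support_iff_exists_getVert.1 hc
  rcases Nat.eq_zero_or_pos i with rfl | hpos
  · exact hx (hp.mem_support_of_adj_start (by simpa using hcx))
  · rw [p.getVert_of_length_le (by omega)] at hcx
    exact hx (hp.mem_support_of_adj_end hcx)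

/-- A cycle of a connected graph with one more edge than a longest path is Hamiltonian. -/
theorem IsLongestPath.mem_support_of_isCycle {G : SimpleGraph V} (hG : G.Connected)
    {u v a : V} {p : G.Walk u v} (hp : IsLongestPath p) {c : G.Walk a a} (hc : c.IsCycle)
    (hlen : c.length = p.length + 1) (w : V) : w ∈ c.support := by
  classical
  by_contra hw
  obtain ⟨b, x, hb, hx, hbx⟩ :=
    hG.exists_adj_mem_notMem (S := {y | y ∈ c.support}) c.start_mem_support hw
  have hrot := hc.rotate hb
  have hpath := hrot.isPath_dropLast
  have hx' : x ∉ (c.rotate b hb).dropLast.support := by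
    intro h
    rw [Walk.support_dropLast hrot.not_nil] at h
    exact hx ((Walk.mem_support_rotate_iff c b hb).1 (List.mem_of_mem_dropLast h))
  have := hp.2 _ _ (Walk.cons hbx.symm (c.rotate b hb).dropLast)
    ((Walk.cons_isPath_iff _ _).2 ⟨hpath, hx'⟩)
  have hl : (c.rotate b hb).length = c.length := by simp
  simp [Walk.dropLast] at this
  omega

/-- Crossing chords from the end-vertices of a path close it up to a cycle on the same vertices. -/
theorem SimpleGraph.Walk.IsPath.exists_isCycle_of_crossing {G : SimpleGraph V} {u v : V}
    {p : G.Walk u v} (hp : p.IsPath) (hlen : 2 ≤ p.length) {i : ℕ} (hi : i < p.length)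
    (hu : G.Adj u (p.getVert (i + 1))) (hv : G.Adj v (p.getVert i)) :
    ∃ (a : V) (c : G.Walk a a), c.IsCycle ∧ c.length = p.length + 1 := by
  let q : G.Walk u (p.getVert (i + 1)) :=
    (p.take i).append (Walk.cons hv.symm (p.drop (i + 1)).reverse)
  have hq : q.IsPath := by
    have hsupp : q.support = p.support.take (i + 1) ++ (p.support.drop (i + 1)).reverse := by
      simp only [q, Walk.support_append, Walk.support_cons, List.tail_cons, Walk.support_reverse,
        Walk.support_take, Walk.drop_support_eq_support_drop_min]
      rw [min_eq_left (by omega)]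
    rw [Walk.isPath_def, hsupp,
      ((List.Perm.refl _).append (List.reverse_perm _)).nodup_iff, List.take_append_drop]
    exact hp.support_nodup
  have hql : q.length = p.length := by
    simp [q]
    omega
  exact ⟨_, Walk.cons hu.symm q, Walk.isCycle_iff_isPath_tail_and_le_length.2
    ⟨by simpa using hq, by simp [hql, hlen]⟩, by simp [hql]⟩

/-- If the end-vertices of a longest path have no crossing chords, then their degree sum is at
most the length of the path. -/
theorem IsLongestPath.degree_add_degree_le [Fintype V] {G : SimpleGraph V} [DecidableRel G.Adj]
    {u v : V} {p : G.Walk u v} (hp : IsLongestPath p)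
    (hcross : ∀ i < p.length, G.Adj u (p.getVert (i + 1)) → ¬ G.Adj v (p.getVert i)) :
    G.degree u + G.degree v ≤ p.length := by
  classical
  let A := (Finset.range p.length).filter fun i => G.Adj u (p.getVert (i + 1))
  let B := (Finset.range p.length).filter fun i => G.Adj v (p.getVert i)
  have hA : G.degree u ≤ A.card := by
    rw [← G.card_neighborFinset_eq_degree]
    refine le_trans (Finset.card_le_card (t := A.image fun i => p.getVert (i + 1)) ?_)
      Finset.card_image_le
    intro w hw
    rw [mem_neighborFinset] at hw
    obtain ⟨i, rfl, hi⟩ :=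
      Walk.mem_support_iff_exists_getVert.1 (hp.mem_support_of_adj_start hw)
    obtain ⟨j, rfl⟩ : ∃ j, i = j + 1 := by
      refine Nat.exists_eq_succ_of_ne_zero ?_
      rintro rfl
      simp at hw
    exact Finset.mem_image.2 ⟨j, by simp [A, hw]; omega, rfl⟩
  have hB : G.degree v ≤ B.card := by
    rw [← G.card_neighborFinset_eq_degree]
    refine le_trans (Finset.card_le_card (t := B.image fun i => p.getVert i) ?_)
      Finset.card_image_le
    intro w hw
    rw [mem_neighborFinset] at hw
    obtain ⟨i, rfl, hi⟩ :=
      Walk.mem_support_iff_exists_getVert.1 (hp.mem_support_of_adj_end hw)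
    have hne : i ≠ p.length := by
      rintro rfl
      simp at hw
    exact Finset.mem_image.2 ⟨i, by simp [B, hw]; omega, rfl⟩
  have hdisj : Disjoint A B := by
    rw [Finset.disjoint_left]
    intro i hiA hiB
    simp only [A, B, Finset.mem_filter, Finset.mem_range] at hiA hiB
    exact hcross i hiA.1 hiA.2 hiB.2
  have hAB : (A ∪ B).card ≤ (Finset.range p.length).card :=
    Finset.card_le_card (Finset.union_subset (Finset.filter_subset _ _) (Finset.filter_subset _ _))
  rw [Finset.card_union_of_disjoint hdisj, Finset.card_range] at hAB
  omega

theorem minDegreeSum_two_le [Fintype V] {G : SimpleGraph V} [DecidableRel G.Adj] {u v : V}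
    (hne : u ≠ v) (hadj : ¬ G.Adj u v) :
    minDegreeSum G 2 ≤ ((G.degree u + G.degree v : ℕ) : ℕ∞) := by
  classical
  have hind : IsIndSet G (({u, v} : Finset V) : Set V) := by
    intro a ha b hb
    simp only [Finset.coe_insert, Finset.coe_singleton, Set.mem_insert_iff,
      Set.mem_singleton_iff] at ha hb
    rcases ha with rfl | rfl <;> rcases hb with rfl | rfl
    · exact G.irrefl
    · exact hadj
    · exact fun h => hadj h.symm
    · exact G.irrefl
  refine (iInf₂_le ({u, v} : Finset V) ⟨Finset.card_pair hne, hind⟩).trans ?_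
  rw [Finset.sum_pair hne]
  simp

/-- **Corollary 9.** If `G` is connected of order `n` and `σ_2 ≥ n - 2k + 2` for
some positive integer `k`, then `G` has a dominating `k`-ended tree. -/
theorem corollary9 [Fintype V] (G : SimpleGraph V) [DecidableRel G.Adj]
    (hG : G.Connected) (k : ℕ) (hk : 1 ≤ k)
    (h : (Fintype.card V : ℕ∞) + 2 ≤ minDegreeSum G 2 + ((2 * k : ℕ) : ℕ∞)) :
    ∃ H : G.Subgraph, IsKEndedTree G k H ∧ IsIndSet G H.vertsᶜ := by
  have := hG.nonempty
  obtain ⟨u, v, p, hpath, hmax⟩ := Walk.exists_isPath_forall_isPath_length_le_length G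
  have hp : IsLongestPath p := ⟨hpath, hmax⟩
  have hcard := hpath.ncard_verts_toSubgraph
  by_cases hlen : p.length ≤ 1
  · refine ⟨p.toSubgraph, Or.inr ⟨hk, p.toSubgraph_connected, Or.inl (by omega)⟩, ?_⟩
    intro a ha
    exact absurd (p.mem_verts_toSubgraph.2 (hp.mem_support_of_length_le_one hG hlen a)) ha
  by_cases hcross : ∃ i < p.length, G.Adj u (p.getVert (i + 1)) ∧ G.Adj v (p.getVert i)
  · obtain ⟨i, hi, hu, hv⟩ := hcross
    obtain ⟨a, c, hc, hcl⟩ := hpath.exists_isCycle_of_crossing (by omega) hi hu hv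
    refine ⟨c.toSubgraph, Or.inr ⟨hk, c.toSubgraph_connected, Or.inr fun w hw =>
      hc.ncard_neighborSet_toSubgraph_eq_two (c.mem_verts_toSubgraph.1 hw)⟩, ?_⟩
    intro w hw
    exact absurd (c.mem_verts_toSubgraph.2 (hp.mem_support_of_isCycle hG hc hcl w)) hw
  · push Not at hcross
    have hdeg := hp.degree_add_degree_le hcross
    have hne : u ≠ v := by
      rintro rfl
      have := Walk.length_eq_zero_iff.2 (Walk.isPath_iff_nil.1 hpath)
      omega
    have hadj : ¬ G.Adj u v := by
      intro huv
      have hl : p.length - 1 + 1 = p.length := by omega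
      have hstep := p.adj_getVert_succ (i := p.length - 1) (by omega)
      refine hcross (p.length - 1) (by omega) ?_ ?_
      · rwa [hl, p.getVert_length]
      · rw [hl, p.getVert_length] at hstep
        exact hstep.symm
    have hsum : Fintype.card V + 2 ≤ p.length + 2 * k := by
      have h1 : (Fintype.card V : ℕ∞) + 2 ≤
          ((G.degree u + G.degree v : ℕ) : ℕ∞) + ((2 * k : ℕ) : ℕ∞) :=
        h.trans (by gcongr; exact minDegreeSum_two_le hne hadj)
      have h2 : Fintype.card V + 2 ≤ G.degree u + G.degree v + 2 * k := by exact_mod_cast h1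
      omega
    have hlt := hpath.length_lt
    obtain ⟨K, hK, hKl, hKd⟩ := exists_dominating_tree_of_card_le hG (k - 2) p.toSubgraph
      p.toSubgraph_connected hpath.isAcyclic_spanningCoe_toSubgraph (by omega)
    have hlow := hpath.ncard_lowDegreeSet_toSubgraph_le
    exact ⟨K, Or.inl ⟨hK, by omega⟩, hKd⟩
end

section
/- Let G be a connected graph with σ_2 ≥ t_2. Then t_1 ≥ t_2, i.e., the circumference of G is at least the order of a longest path in G. (Corollary 10) -/
open SimpleGraph

variable {V : Type*}

theorem bddAbove_ncard_verts_isKEndedTree [Finite V] (G : SimpleGraph V) (k : ℕ) :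
    BddAbove {n | ∃ H : G.Subgraph, IsKEndedTree G k H ∧ H.verts.ncard = n} := by
  refine ⟨Nat.card V, ?_⟩
  rintro _ ⟨H, -, rfl⟩
  exact Set.ncard_le_card H.verts

theorem ncard_verts_le_maxKEndedOrder [Finite V] {G : SimpleGraph V} {k : ℕ} {H : G.Subgraph}
    (hH : IsKEndedTree G k H) : H.verts.ncard ≤ maxKEndedOrder G k := by
  exact le_csSup (bddAbove_ncard_verts_isKEndedTree G k) ⟨H, hH, rfl⟩

theorem SimpleGraph.Walk.IsPath.isTree_coe_toSubgraph [Finite V] {G : SimpleGraph V} {u v : V}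
    {p : G.Walk u v} (hp : p.IsPath) : p.toSubgraph.coe.IsTree := by
  classical
  have hconn := p.toSubgraph_connected.coe
  refine isTree_iff_connected_and_card.2 ⟨hconn, ?_⟩
  refine le_antisymm ?_ hconn.card_vert_le_card_edgeSet_add_one
  have hverts : Nat.card p.toSubgraph.verts = p.length + 1 := by
    rw [Nat.card_coe_set_eq, hp.ncard_verts_toSubgraph]
  have hedges : p.toSubgraph.edgeSet = ↑p.edges.toFinset := by
    ext; simp
  rw [hverts, Nat.card_coe_set_eq,
    ← Set.ncard_image_of_injective _ (Sym2.map.injective Subtype.val_injective),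
    Subgraph.image_coe_edgeSet_coe, hedges, Set.ncard_coe_finset, ← p.length_edges]
  exact Nat.succ_le_succ (List.toFinset_card_le _)

theorem SimpleGraph.Walk.IsPath.endVertexCount_toSubgraph_le_two {G : SimpleGraph V} {u v : V}
    {p : G.Walk u v} (hp : p.IsPath) : endVertexCount p.toSubgraph ≤ 2 := by
  refine le_trans (Set.ncard_le_ncard (t := {u, v}) ?_ (Set.toFinite _))
    ((Set.ncard_insert_le u {v}).trans (by simp))
  rintro w ⟨hw, hw1⟩
  obtain ⟨i, rfl, hi⟩ := Walk.mem_support_iff_exists_getVert.1 (p.mem_verts_toSubgraph.1 hw)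
  by_contra hne
  have h0 : i ≠ 0 := by rintro rfl; simp at hne
  have hl : i ≠ p.length := by rintro rfl; simp at hne
  have := hp.ncard_neighborSet_toSubgraph_internal_eq_two h0 (lt_of_le_of_ne hi hl)
  omega

theorem SimpleGraph.Walk.IsPath.length_lt_maxKEndedOrder_two [Finite V] {G : SimpleGraph V}
    {u v : V} {p : G.Walk u v} (hp : p.IsPath) : p.length < maxKEndedOrder G 2 := by
  have := ncard_verts_le_maxKEndedOrder (k := 2)
    (Or.inl ⟨hp.isTree_coe_toSubgraph, hp.endVertexCount_toSubgraph_le_two⟩)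
  rwa [hp.ncard_verts_toSubgraph] at this

/-- Closing up a path on at least three vertices whose ends are adjacent gives a cycle. -/
theorem SimpleGraph.Walk.IsPath.length_lt_maxKEndedOrder_one_of_adj [Finite V]
    {G : SimpleGraph V} {u v : V} {p : G.Walk u v} (hp : p.IsPath) (hlen : 2 ≤ p.length)
    (h : G.Adj v u) : p.length < maxKEndedOrder G 1 := by
  have hc : (Walk.cons h p).IsCycle := by
    refine (Walk.cons_isCycle_iff p h).2 ⟨hp, fun he => ?_⟩
    have hsnd := hp.eq_snd_of_mem_edges (Sym2.eq_swap ▸ he)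
    have : p.length = 1 := hp.getVert_injOn (by simp) (by simp; omega)
      (by rw [Walk.getVert_length]; exact hsnd)
    omega
  have hverts : (Walk.cons h p).toSubgraph.verts = p.toSubgraph.verts := by
    ext w
    simp only [Walk.mem_verts_toSubgraph, Walk.support_cons, List.mem_cons, or_iff_right_iff_imp]
    rintro rfl
    exact p.end_mem_support
  have := ncard_verts_le_maxKEndedOrder (k := 1) (H := (Walk.cons h p).toSubgraph)
    (Or.inr ⟨le_rfl, Walk.toSubgraph_connected _, Or.inr fun w hw =>
      hc.ncard_neighborSet_toSubgraph_eq_two ((Walk.mem_verts_toSubgraph _).1 hw)⟩)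
  rwa [hverts, hp.ncard_verts_toSubgraph] at this

/-- If all neighbours of the ends of a path lie on the path, and their degrees sum to more than its
length, then some pair of consecutive vertices is joined crosswise to the ends. -/
theorem SimpleGraph.Walk.exists_crossing {G : SimpleGraph V} [Fintype V] [DecidableRel G.Adj]
    {u v : V} (p : G.Walk u v) (hu : ∀ w, G.Adj u w → w ∈ p.support)
    (hv : ∀ w, G.Adj v w → w ∈ p.support) (hdeg : p.length < G.degree u + G.degree v) :
    ∃ i < p.length, G.Adj u (p.getVert (i + 1)) ∧ G.Adj v (p.getVert i) := by
  classical
  set A := (Finset.range p.length).filter fun i => G.Adj u (p.getVert (i + 1)) with hA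
  set B := (Finset.range p.length).filter fun i => G.Adj v (p.getVert i) with hB
  have hAcard : G.degree u ≤ A.card := by
    refine le_trans (Finset.card_le_card ?_)
      (Finset.card_image_le (f := fun i => p.getVert (i + 1)))
    intro w hw
    rw [mem_neighborFinset] at hw
    obtain ⟨i, rfl, hi⟩ := Walk.mem_support_iff_exists_getVert.1 (hu w hw)
    have h0 : i ≠ 0 := by rintro rfl; simp at hw
    obtain ⟨j, rfl⟩ := Nat.exists_eq_succ_of_ne_zero h0
    exact Finset.mem_image.2 ⟨j, by simpa [hA] using ⟨hi, hw⟩, rfl⟩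
  have hBcard : G.degree v ≤ B.card := by
    refine le_trans (Finset.card_le_card ?_) (Finset.card_image_le (f := p.getVert))
    intro w hw
    rw [mem_neighborFinset] at hw
    obtain ⟨i, rfl, hi⟩ := Walk.mem_support_iff_exists_getVert.1 (hv w hw)
    have hl : i ≠ p.length := by rintro rfl; simp at hw
    exact Finset.mem_image.2 ⟨i, by simpa [hB] using ⟨lt_of_le_of_ne hi hl, hw⟩, rfl⟩
  have hAB : ¬ Disjoint A B := by
    intro hdisj
    have hcard := Finset.card_union_of_disjoint hdisj
    have hle := Finset.card_le_card
      (Finset.union_subset (Finset.filter_subset _ _) (Finset.filter_subset _ _) :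
        A ∪ B ⊆ Finset.range p.length)
    rw [Finset.card_range] at hle
    omega
  obtain ⟨i, hiA, hiB⟩ := Finset.not_disjoint_iff.1 hAB
  rw [hA, Finset.mem_filter, Finset.mem_range] at hiA
  exact ⟨i, hiA.1, hiA.2, (Finset.mem_filter.1 hiB).2⟩

/-- Rotating a path along an edge from its end to an interior vertex. -/
theorem SimpleGraph.Walk.IsPath.exists_rotation {G : SimpleGraph V} {u v : V} {p : G.Walk u v}
    (hp : p.IsPath) {i : ℕ} (hi : i < p.length) (h : G.Adj v (p.getVert i)) :
    ∃ q : G.Walk (p.getVert (i + 1)) u, q.IsPath ∧ q.length = p.length := by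
  refine ⟨(p.drop (i + 1)).append (Walk.cons h (p.take i).reverse), ?_, ?_⟩
  · rw [Walk.isPath_def, Walk.support_append, Walk.support_cons, List.tail_cons,
      Walk.support_reverse, Walk.support_take, Walk.drop_support_eq_support_drop_min,
      min_eq_left hi]
    refine (((List.reverse_perm _).append_left _).trans List.perm_append_comm).nodup_iff.2 ?_
    rw [List.take_append_drop]
    exact hp.support_nodup
  · simp only [Walk.length_append, Walk.length_cons, Walk.length_reverse, Walk.take_length,
      Walk.drop_length]
    omega

/-- A tree with at most two leaves has maximum degree at most two. -/
theorem SimpleGraph.IsTree.ncard_neighborSet_le_two [Finite V] [Nontrivial V]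
    {T : SimpleGraph V} (hT : T.IsTree)
    (hleaf : {v | (T.neighborSet v).ncard = 1}.ncard ≤ 2) (x : V) :
    (T.neighborSet x).ncard ≤ 2 := by
  classical
  have := Fintype.ofFinite V
  have hdegree (v : V) : (T.neighborSet v).ncard = T.degree v := by
    rw [← Nat.card_coe_set_eq, Nat.card_eq_fintype_card, card_neighborSet_eq_degree]
  simp only [hdegree] at hleaf ⊢
  rw [Set.ncard_eq_toFinset_card', Set.toFinset_ofPred] at hleaf
  by_contra! hx
  have hpos (v : V) : 0 < T.degree v := hT.connected.preconnected.degree_pos_of_nontrivial v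
  have hlt : ∑ _v : V, 2 < ∑ v, (T.degree v + if T.degree v = 1 then 1 else 0) := by
    refine Finset.sum_lt_sum (fun v _ => ?_) ⟨x, Finset.mem_univ x, by omega⟩
    have := hpos v
    split_ifs <;> omega
  rw [Finset.sum_add_distrib, ← Finset.card_filter, sum_degrees_eq_twice_card_edges] at hlt
  have := hT.card_edgeFinset
  simp only [Finset.sum_const, Finset.card_univ, smul_eq_mul] at hlt
  omega

/-- A connected finite graph of maximum degree at most two is traversed by a path. -/
theorem SimpleGraph.Connected.exists_isPath_forall_mem_support [Finite V] {T : SimpleGraph V}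
    (hT : T.Connected) (hdeg : ∀ x, (T.neighborSet x).ncard ≤ 2) :
    ∃ (u v : V) (p : T.Walk u v), p.IsPath ∧ ∀ w, w ∈ p.support := by
  have := hT.nonempty
  obtain ⟨u, v, p, hp, hmax⟩ := Walk.exists_isPath_forall_isPath_length_le_length T
  refine ⟨u, v, p, hp, fun w => ?_⟩
  have hclosed : ∀ x y, T.Adj x y → x ∈ p.support → y ∈ p.support := by
    intro x y hxy hx
    by_contra hy
    obtain ⟨i, rfl, hi⟩ := Walk.mem_support_iff_exists_getVert.1 hx
    rcases eq_or_ne i 0 with rfl | h0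
    · rw [Walk.getVert_zero] at hxy
      have := hmax _ _ _ (hp.cons hy (h := hxy.symm))
      simp at this
    rcases eq_or_ne i p.length with rfl | hl
    · rw [Walk.getVert_length] at hxy
      have := hmax _ _ _ (hp.concat hy hxy)
      simp at this
    have h2 := hp.ncard_neighborSet_toSubgraph_internal_eq_two h0 (lt_of_le_of_ne hi hl)
    have heq := Set.eq_of_subset_of_ncard_le (p.toSubgraph.neighborSet_subset (p.getVert i))
      (h2 ▸ hdeg _) (Set.toFinite _)
    have hmem : y ∈ p.toSubgraph.neighborSet (p.getVert i) := heq ▸ hxy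
    exact hy (p.mem_verts_toSubgraph.1 (p.toSubgraph.edge_vert hmem.symm))
  obtain ⟨q⟩ := hT.preconnected u w
  have hend : ∀ {a b : V} (r : T.Walk a b), a ∈ p.support → b ∈ p.support := by
    intro a b r
    induction r with
    | nil => exact id
    | cons hab _ ih => exact fun ha => ih (hclosed _ _ hab ha)
  exact hend q p.start_mem_support

/-- A subtree with at most two end-vertices is a path. -/
theorem exists_isPath_of_isTree_coe [Finite V] {G : SimpleGraph V} {H : G.Subgraph}
    (hH : H.coe.IsTree) (hends : endVertexCount H ≤ 2) (hcard : 2 ≤ H.verts.ncard) :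
    ∃ (u v : V) (p : G.Walk u v), p.IsPath ∧ p.length + 1 = H.verts.ncard := by
  have : Nontrivial H.verts := by
    rw [Set.nontrivial_coe_sort, ← Set.one_lt_ncard_iff_nontrivial]
    omega
  have hncard (x : H.verts) : (H.coe.neighborSet x).ncard = (H.neighborSet x).ncard := by
    rw [← Nat.card_coe_set_eq, ← Nat.card_coe_set_eq]
    exact Nat.card_congr (Subgraph.coeNeighborSetEquiv x)
  have hleaf : {x | (H.coe.neighborSet x).ncard = 1}.ncard ≤ 2 := by
    refine le_trans (le_of_eq ?_) hends
    rw [endVertexCount, ← Set.ncard_image_of_injective _ Subtype.val_injective]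
    congr 1
    ext x
    simp [hncard, and_comm]
  have hdeg := hH.ncard_neighborSet_le_two hleaf
  obtain ⟨u, v, p, hp, hall⟩ := hH.connected.exists_isPath_forall_mem_support hdeg
  refine ⟨H.hom u, H.hom v, p.map H.hom, hp.map H.hom_injective, ?_⟩
  have hverts : p.toSubgraph.verts = Set.univ := by ext; simp [hall]
  rw [Walk.length_map, ← hp.ncard_verts_toSubgraph, hverts, Set.ncard_univ, Nat.card_coe_set_eq]

/-- **Corollary 10.** If `G` is connected and `σ_2 ≥ t_2`, then `t_1 ≥ t_2`,
i.e. the circumference of `G` is at least the order of a longest path. -/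
theorem corollary10 [Fintype V] (G : SimpleGraph V) [DecidableRel G.Adj]
    (hG : G.Connected)
    (h : (maxKEndedOrder G 2 : ℕ∞) ≤ minDegreeSum G 2) :
    maxKEndedOrder G 1 ≥ maxKEndedOrder G 2 := by
  rcases Set.eq_empty_or_nonempty
    {n | ∃ H : G.Subgraph, IsKEndedTree G 2 H ∧ H.verts.ncard = n} with hempty | hne
  · simp [maxKEndedOrder, hempty]
  obtain ⟨H, hH, hHn⟩ := Nat.sSup_mem hne (bddAbove_ncard_verts_isKEndedTree G 2)
  change H.verts.ncard = maxKEndedOrder G 2 at hHn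
  rw [ge_iff_le, ← hHn]
  rcases hH with ⟨htree, hends⟩ | ⟨-, hcycle⟩
  swap
  · exact ncard_verts_le_maxKEndedOrder (Or.inr ⟨le_rfl, hcycle⟩)
  by_cases hsmall : H.verts.ncard ≤ 2
  · exact ncard_verts_le_maxKEndedOrder (Or.inr ⟨le_rfl, ⟨htree.connected⟩, Or.inl hsmall⟩)
  obtain ⟨u, v, p, hp, hlen⟩ := exists_isPath_of_isTree_coe htree hends (by omega)
  rw [← hlen, Nat.succ_le_iff]
  by_cases hvu : G.Adj v u
  · exact hp.length_lt_maxKEndedOrder_one_of_adj (by omega) hvu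
  have huv : u ≠ v := by
    rintro rfl
    have := Walk.length_eq_zero_iff.2 (Walk.isPath_iff_nil.1 hp)
    omega
  have hu (w : V) (hw : G.Adj u w) : w ∈ p.support := by
    by_contra hnot
    have := (hp.cons hnot (h := hw.symm)).length_lt_maxKEndedOrder_two
    rw [Walk.length_cons] at this
    omega
  have hv (w : V) (hw : G.Adj v w) : w ∈ p.support := by
    by_contra hnot
    have := (hp.concat hnot hw).length_lt_maxKEndedOrder_two
    rw [Walk.length_concat] at this
    omega
  have hdeg : maxKEndedOrder G 2 ≤ G.degree u + G.degree v := by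
    classical
    have hmem : ({u, v} : Finset V) ∈ {s : Finset V | s.card = 2 ∧ IsIndSet G ↑s} := by
      refine ⟨Finset.card_pair huv, ?_⟩
      simp [IsIndSet, hvu, G.adj_comm u v]
    have hle := h.trans (iInf₂_le _ hmem)
    rw [Finset.sum_pair huv] at hle
    exact_mod_cast hle
  obtain ⟨i, hi, hui, hvi⟩ := p.exists_crossing hu hv (by omega)
  obtain ⟨q, hq, hqlen⟩ := hp.exists_rotation hi hvi
  rw [← hqlen]
  exact hq.length_lt_maxKEndedOrder_one_of_adj (by omega) hui
end
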